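/- There exists a constant C > 0, depending only on m, such that for every m×m complex matrix M one has ‖M‖² − Σ_i |λ_i|² ≤ C·‖[M,M*]‖, where (λ_i) is the multiset of roots of the characteristic polynomial of M counted with multiplicity. -/

import Mathlib

open Matrix

/-- The Frobenius norm of a complex square matrix. -/
noncomputable def frobNorm {m : ℕ} (A : Matrix (Fin m) (Fin m) ℂ) : ℝ :=
  Real.sqrt (∑ i, ∑ j, ‖A i j‖ ^ 2)

lemma frobNorm_sq {m : ℕ} (A : Matrix (Fin m) (Fin m) ℂ) :
    frobNorm A ^ 2 = ∑ i, ∑ j, ‖A i j‖ ^ 2 := by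
  unfold frobNorm
  exact Real.sq_sqrt (by positivity)

lemma frobNorm_nonneg' {m : ℕ} (A : Matrix (Fin m) (Fin m) ℂ) : 0 ≤ frobNorm A :=
  Real.sqrt_nonneg _

lemma frobNorm_sq_trace {m : ℕ} (A : Matrix (Fin m) (Fin m) ℂ) :
    ((frobNorm A ^ 2 : ℝ) : ℂ) = (A * Aᴴ).trace := by
  rw [frobNorm_sq]
  simp only [Matrix.trace, Matrix.diag, Matrix.mul_apply, Matrix.conjTranspose_apply]
  push_cast
  refine Finset.sum_congr rfl fun i _ => Finset.sum_congr rfl fun j _ => ?_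
  exact (Complex.mul_conj' (A i j)).symm

lemma frobNorm_conj {m : ℕ} (A U : Matrix (Fin m) (Fin m) ℂ) (h1 : U * Uᴴ = 1) :
    frobNorm (Uᴴ * A * U) = frobNorm A := by
  have h : frobNorm (Uᴴ * A * U) ^ 2 = frobNorm A ^ 2 := by
    apply Complex.ofReal_injective
    rw [frobNorm_sq_trace, frobNorm_sq_trace]
    have : (Uᴴ * A * U) * (Uᴴ * A * U)ᴴ = Uᴴ * (A * Aᴴ * U) := by
      simp only [Matrix.conjTranspose_mul, Matrix.conjTranspose_conjTranspose]
      calc _ = Uᴴ * A * (U * Uᴴ) * Aᴴ * U := by simp only [Matrix.mul_assoc]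
        _ = _ := by rw [h1]; simp only [Matrix.mul_assoc, Matrix.one_mul]
    rw [this, Matrix.trace_mul_comm, Matrix.mul_assoc, h1, Matrix.mul_one]
  exact (pow_left_inj₀ (frobNorm_nonneg' _) (frobNorm_nonneg' _) two_ne_zero).1 h

section
attribute [local instance] Matrix.frobeniusNormedAddCommGroup

lemma frobNorm_eq_norm {m : ℕ} (A : Matrix (Fin m) (Fin m) ℂ) : frobNorm A = ‖A‖ := by
  rw [Matrix.frobenius_norm_def, frobNorm, Real.sqrt_eq_rpow]
  norm_num

lemma frobNorm_add_le {m : ℕ} (A B : Matrix (Fin m) (Fin m) ℂ) :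
    frobNorm (A + B) ≤ frobNorm A + frobNorm B := by
  simp only [frobNorm_eq_norm]
  exact norm_add_le A B
end

lemma frobNorm_submatrix_le {n : ℕ} (A : Matrix (Fin (n + 1)) (Fin (n + 1)) ℂ) :
    frobNorm (A.submatrix Fin.succ Fin.succ) ≤ frobNorm A := by
  apply Real.sqrt_le_sqrt
  rw [Fin.sum_univ_succ (fun i => ∑ j, ‖A i j‖ ^ 2)]
  refine le_add_of_nonneg_of_le (by positivity) (Finset.sum_le_sum fun i _ => ?_)
  rw [Fin.sum_univ_succ (fun j => ‖A i.succ j‖ ^ 2)]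
  exact le_add_of_nonneg_of_le (by positivity) le_rfl

lemma norm_apply_le_frobNorm {n : ℕ} (A : Matrix (Fin n) (Fin n) ℂ) (i j : Fin n) :
    ‖A i j‖ ≤ frobNorm A := by
  apply Real.le_sqrt_of_sq_le
  calc ‖A i j‖ ^ 2 ≤ ∑ j, ‖A i j‖ ^ 2 :=
        Finset.single_le_sum (f := fun j => ‖A i j‖ ^ 2) (fun _ _ => by positivity)
          (Finset.mem_univ j)
    _ ≤ _ := Finset.single_le_sum (f := fun i => ∑ j, ‖A i j‖ ^ 2)
          (fun _ _ => by positivity) (Finset.mem_univ i)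

lemma frobNorm_vecMulVec {n : ℕ} (v : Fin n → ℂ) :
    frobNorm (Matrix.of fun i j => star (v i) * v j) = ∑ i, ‖v i‖ ^ 2 := by
  unfold frobNorm
  rw [Real.sqrt_eq_iff_eq_sq (by positivity) (by positivity), sq, Finset.sum_mul_sum]
  simp [mul_pow]

lemma exists_unitary_first_column {n : ℕ} (M : Matrix (Fin (n + 1)) (Fin (n + 1)) ℂ) :
    ∃ U : Matrix (Fin (n + 1)) (Fin (n + 1)) ℂ, U * Uᴴ = 1 ∧
      ∀ i : Fin n, (Uᴴ * M * U) i.succ 0 = 0 := by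
  obtain ⟨μ, hμ⟩ := Module.End.exists_eigenvalue (Matrix.toEuclideanLin M)
  obtain ⟨v, hv⟩ := hμ.exists_hasEigenvector
  have hv0 : ‖v‖ ≠ 0 := norm_ne_zero_iff.2 hv.2
  have hv1 := hv.apply_eq_smul
  set w : EuclideanSpace ℂ (Fin (n + 1)) := ((‖v‖⁻¹ : ℝ) : ℂ) • v with hw
  have hw1 : Matrix.toEuclideanLin M w = μ • w := by
    rw [hw, map_smul, hv1, smul_comm]
  have hwn : ‖w‖ = 1 := by
    rw [hw, norm_smul]; simp [hv0]
  have ho : Orthonormal ℂ (({0} : Set (Fin (n + 1))).domRestrict (fun _ => w)) := by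
    constructor
    · intro i; exact hwn
    · intro i j hij; exact absurd (Subsingleton.elim i j) hij
  obtain ⟨b, hb⟩ := ho.exists_orthonormalBasis_extension_of_card_eq (by simp)
  have hb0 : b 0 = w := hb 0 rfl
  let U : Matrix (Fin (n + 1)) (Fin (n + 1)) ℂ := Matrix.of fun i j => b j i
  have hU : Uᴴ * U = 1 := by
    ext i j
    have := orthonormal_iff_ite.1 b.orthonormal i j
    rw [PiLp.inner_apply] at this
    simp only [Matrix.mul_apply, Matrix.conjTranspose_apply, U, Matrix.of_apply, Matrix.one_apply]
    rw [← this]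
    refine Finset.sum_congr rfl fun k _ => ?_
    simp [mul_comm]
  refine ⟨U, mul_eq_one_comm.1 hU, fun i => ?_⟩
  have hc : ∀ k, (M * U) k 0 = μ * U k 0 := by
    intro k
    have := congrArg (fun x : EuclideanSpace ℂ (Fin (n + 1)) => x k) hw1
    simpa [Matrix.mul_apply, U, hb0, Matrix.mulVec, dotProduct, Matrix.toLpLin_apply] using this
  have : (Uᴴ * M * U) i.succ 0 = μ * (Uᴴ * U) i.succ 0 := by
    rw [Matrix.mul_assoc, Matrix.mul_apply, Matrix.mul_apply, Finset.mul_sum]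
    refine Finset.sum_congr rfl fun k _ => ?_
    rw [hc]; ring
  rw [this, hU]
  simp

lemma charpoly_first_column {n : ℕ} (T : Matrix (Fin (n + 1)) (Fin (n + 1)) ℂ)
    (h : ∀ i : Fin n, T i.succ 0 = 0) :
    T.charpoly = (Polynomial.X - Polynomial.C (T 0 0)) *
      (T.submatrix Fin.succ Fin.succ).charpoly := by
  unfold Matrix.charpoly
  rw [Matrix.det_succ_column_zero, Fin.sum_univ_succ, Finset.sum_eq_zero]
  · have : (T.charmatrix.submatrix (Fin.succAbove 0) Fin.succ) =
        (T.submatrix Fin.succ Fin.succ).charmatrix := by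
      ext1 i j
      simp [Matrix.charmatrix_apply, Matrix.diagonal_apply]
    rw [this]
    simp [Matrix.charmatrix_apply]
  · intro i _
    have : T.charmatrix i.succ 0 = 0 := by
      simp [Matrix.charmatrix_apply, h]
    rw [this]; simp

lemma step {n : ℕ} (C : ℝ) (hC : 0 < C)
    (ih : ∀ M : Matrix (Fin n) (Fin n) ℂ,
      frobNorm M ^ 2 - (((Matrix.charpoly M).roots.map fun z => ‖z‖ ^ 2)).sum ≤
        C * frobNorm (M * Mᴴ - Mᴴ * M))
    (T : Matrix (Fin (n + 1)) (Fin (n + 1)) ℂ) (h : ∀ i : Fin n, T i.succ 0 = 0) :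
    frobNorm T ^ 2 - (((Matrix.charpoly T).roots.map fun z => ‖z‖ ^ 2)).sum ≤
        (1 + 2 * C) * frobNorm (T * Tᴴ - Tᴴ * T) := by
  set S := T.submatrix Fin.succ Fin.succ with hS
  set E := T * Tᴴ - Tᴴ * T with hE
  set v : Fin n → ℂ := fun j => T 0 j.succ with hv
  have hroots : (((Matrix.charpoly T).roots.map fun z => ‖z‖ ^ 2)).sum =
      ‖T 0 0‖ ^ 2 + (((Matrix.charpoly S).roots.map fun z => ‖z‖ ^ 2)).sum := by
    rw [charpoly_first_column T h, Polynomial.roots_mul, Polynomial.roots_X_sub_C]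
    · simp [hS]
    · exact mul_ne_zero (Polynomial.X_sub_C_ne_zero _) (Matrix.charpoly_monic _).ne_zero
  have hnorm : frobNorm T ^ 2 = ‖T 0 0‖ ^ 2 + ∑ j, ‖v j‖ ^ 2 + frobNorm S ^ 2 := by
    rw [frobNorm_sq, frobNorm_sq, Fin.sum_univ_succ, Fin.sum_univ_succ]
    congr 1
    refine Finset.sum_congr rfl fun i _ => ?_
    rw [Fin.sum_univ_succ, h]
    simp [hS]
  have h00 : E 0 0 = ((∑ j, ‖v j‖ ^ 2 : ℝ) : ℂ) := by
    simp only [hE, Matrix.sub_apply, Matrix.mul_apply, Matrix.conjTranspose_apply,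
      Fin.sum_univ_succ, h]
    push_cast
    simp only [← Complex.mul_conj', hv]
    simp [mul_comm]
  have hvE : ∑ j, ‖v j‖ ^ 2 ≤ frobNorm E := by
    have := norm_apply_le_frobNorm E 0 0
    rw [h00, Complex.norm_real] at this
    exact (le_abs_self _).trans this
  have hblock : S * Sᴴ - Sᴴ * S =
      E.submatrix Fin.succ Fin.succ + Matrix.of fun i j => star (v i) * v j := by
    ext i j
    simp only [hE, hS, hv, Matrix.sub_apply, Matrix.mul_apply, Matrix.conjTranspose_apply,
      Fin.sum_univ_succ (n := n), h, Matrix.submatrix_apply, Matrix.add_apply, Matrix.of_apply]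
    ring
  have hle : frobNorm (S * Sᴴ - Sᴴ * S) ≤ 2 * frobNorm E := by
    rw [hblock]
    refine (frobNorm_add_le _ _).trans ?_
    rw [frobNorm_vecMulVec]
    linarith [frobNorm_submatrix_le E]
  have := ih S
  have := mul_le_mul_of_nonneg_left hle hC.le
  rw [hroots, hnorm]
  linarith

/-- There exists a constant `C > 0`, depending only on `m`, such that for
every `m × m` complex matrix `M`,
`‖M‖² − ∑_i |λ_i|² ≤ C ‖[M,M*]‖`, where `(λ_i)` is the multiset of roots of the
characteristic polynomial of `M` counted with multiplicity. -/
theorem sq_frobNorm_sub_sum_sq_eigenvalues_le (m : ℕ) :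
    ∃ C : ℝ, 0 < C ∧ ∀ M : Matrix (Fin m) (Fin m) ℂ,
      frobNorm M ^ 2 - (((Matrix.charpoly M).roots.map fun z => ‖z‖ ^ 2)).sum ≤
        C * frobNorm (M * Mᴴ - Mᴴ * M) := by
  induction m with
  | zero => exact ⟨1, one_pos, fun M => by simp [frobNorm, Matrix.charpoly]⟩
  | succ n ih =>
    obtain ⟨C, hC, ih⟩ := ih
    refine ⟨1 + 2 * C, by positivity, fun M => ?_⟩
    obtain ⟨U, hU, h⟩ := exists_unitary_first_column M
    have key := step C hC ih (Uᴴ * M * U) h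
    have hcp : (Uᴴ * M * U).charpoly = M.charpoly := by
      rw [Matrix.mul_assoc, Matrix.charpoly_mul_comm, Matrix.mul_assoc, hU, Matrix.mul_one]
    have hcomm : (Uᴴ * M * U) * (Uᴴ * M * U)ᴴ - (Uᴴ * M * U)ᴴ * (Uᴴ * M * U) =
        Uᴴ * (M * Mᴴ - Mᴴ * M) * U := by
      simp only [Matrix.conjTranspose_mul, Matrix.conjTranspose_conjTranspose]
      calc _ = Uᴴ * M * (U * Uᴴ) * Mᴴ * U - Uᴴ * Mᴴ * (U * Uᴴ) * M * U := by
            simp only [Matrix.mul_assoc]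
        _ = _ := by
            rw [hU]
            simp only [Matrix.mul_assoc, Matrix.one_mul, Matrix.mul_sub, Matrix.sub_mul]
    rwa [hcomm, hcp, frobNorm_conj _ _ hU, frobNorm_conj _ _ hU] at key
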